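/- arXiv:2111.04697 — 2 statements merged into one kernel-verified Lean document; each statement's English description precedes it below -/
import Mathlib

section
/- Let p ≠ 3 be a prime and let F(x,y,z) = y³ − f(x,z) with f a binary sextic form over F_p. If F is reducible in F̄_p[x,z][y], then f = a·h³ for some a ∈ F_p and some binary quadratic form h over F_p, and F factors as (y − αh)(y − ωαh)(y − ω²αh) where α³ = a and ω is a primitive third root of unity in F_{p²}. Consequently, the number of coefficient vectors (c_0,…,c_6) ∈ F_p^7 for which F is NOT absolutely irreducible is exactly p³. -/
/-- The binary sextic form `f(x,z) = Σ_{i=0}^{6} cᵢ xⁱ z^{6−i}` over `F_p`. -/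
noncomputable def sexticForm (p : ℕ) [Fact p.Prime] (c : Fin 7 → ZMod p) :
    MvPolynomial (Fin 2) (ZMod p) :=
  ∑ i : Fin 7, MvPolynomial.C (c i) * MvPolynomial.X 0 ^ (i : ℕ) *
    MvPolynomial.X 1 ^ (6 - (i : ℕ))

/-- `F = y³ − f(x,z)`, viewed in `F̄_p[x,z][y]`. -/
noncomputable def sexticCurveBar (p : ℕ) [Fact p.Prime] (c : Fin 7 → ZMod p) :
    Polynomial (MvPolynomial (Fin 2) (AlgebraicClosure (ZMod p))) :=
  Polynomial.X ^ 3 -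
    Polynomial.C (MvPolynomial.map (algebraMap (ZMod p) (AlgebraicClosure (ZMod p)))
      (sexticForm p c))

/-- Coefficient vector of `a·(h₀ + h₁X + h₂X²)³`. -/
def cubeVec {K : Type*} [Field K] (a h0 h1 h2 : K) : Fin 7 → K :=
  ![a * h0 ^ 3, a * (3 * h0 ^ 2 * h1), a * (3 * h0 ^ 2 * h2 + 3 * h0 * h1 ^ 2),
    a * (6 * h0 * h1 * h2 + h1 ^ 3), a * (3 * h0 * h2 ^ 2 + 3 * h1 ^ 2 * h2),
    a * (3 * h1 * h2 ^ 2), a * h2 ^ 3]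

/-- The binary quadratic form with given coefficients. -/
noncomputable def quadForm {K : Type*} [Field K] (h0 h1 h2 : K) : MvPolynomial (Fin 2) K :=
  MvPolynomial.C h0 * MvPolynomial.X 1 ^ 2 + MvPolynomial.C h1 * (MvPolynomial.X 0 * MvPolynomial.X 1)
    + MvPolynomial.C h2 * MvPolynomial.X 0 ^ 2

theorem quadForm_homog {K : Type*} [Field K] (h0 h1 h2 : K) :
    (quadForm h0 h1 h2).IsHomogeneous 2 := by
  unfold quadForm
  have e0 := MvPolynomial.isHomogeneous_X K (0 : Fin 2)
  have e1 := MvPolynomial.isHomogeneous_X K (1 : Fin 2)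
  exact (((e1.pow 2).C_mul h0).add ((e0.mul e1).C_mul h1)).add ((e0.pow 2).C_mul h2)

theorem sexticForm_cubeVec (p : ℕ) [Fact p.Prime] (a h0 h1 h2 : ZMod p) :
    sexticForm p (cubeVec a h0 h1 h2) = MvPolynomial.C a * quadForm h0 h1 h2 ^ 3 := by
  unfold sexticForm quadForm cubeVec
  simp only [Fin.sum_univ_succ, Fin.sum_univ_zero]
  simp [map_ofNat]
  ring

theorem exists_cube_root (p : ℕ) [Fact p.Prime] (c : Fin 7 → ZMod p)
    (h : ¬ Irreducible (sexticCurveBar p c)) :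
    ∃ g, g ^ 3 = MvPolynomial.map (algebraMap (ZMod p) (AlgebraicClosure (ZMod p)))
      (sexticForm p c) := by
  unfold sexticCurveBar at h
  rw [Polynomial.Monic.irreducible_iff_roots_eq_zero_of_degree_le_three
    (Polynomial.monic_X_pow_sub_C _ (by norm_num))
    (by rw [Polynomial.natDegree_X_pow_sub_C]; norm_num)
    (by rw [Polynomial.natDegree_X_pow_sub_C])] at h
  obtain ⟨g, hg⟩ := Multiset.exists_mem_of_ne_zero h
  refine ⟨g, ?_⟩
  have := Polynomial.isRoot_of_mem_roots hg
  simpa [sub_eq_zero] using this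

theorem exists_cubeVec_bar (p : ℕ) [Fact p.Prime] (c : Fin 7 → ZMod p)
    (h : ¬ Irreducible (sexticCurveBar p c)) :
    ∃ g0 g1 g2 : AlgebraicClosure (ZMod p),
      ∀ i, algebraMap (ZMod p) (AlgebraicClosure (ZMod p)) (c i) = cubeVec 1 g0 g1 g2 i := by
  obtain ⟨g, hg⟩ := exists_cube_root p c h
  set φ := algebraMap (ZMod p) (AlgebraicClosure (ZMod p)) with hφ
  let G : Polynomial (AlgebraicClosure (ZMod p)) := MvPolynomial.aeval ![Polynomial.X, 1] g
  have hG : G ^ 3 = ∑ i : Fin 7, Polynomial.C (φ (c i)) * Polynomial.X ^ (i : ℕ) := by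
    simp only [G, ← map_pow, hg, sexticForm]
    simp [Polynomial.algebraMap_eq]
  have hdeg : G.natDegree ≤ 2 := by
    have h1 : (G ^ 3).natDegree ≤ 6 := by
      rw [hG]
      refine Polynomial.natDegree_sum_le_of_forall_le _ _ fun i _ => ?_
      exact (Polynomial.natDegree_C_mul_X_pow_le _ _).trans (by omega)
    rw [Polynomial.natDegree_pow] at h1
    omega
  have hGe : G = Polynomial.C (G.coeff 0) + Polynomial.C (G.coeff 1) * Polynomial.X
      + Polynomial.C (G.coeff 2) * Polynomial.X ^ 2 := by
    conv_lhs => rw [G.as_sum_range_C_mul_X_pow' (n := 3) (by omega)]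
    simp [Finset.sum_range_succ]
  refine ⟨G.coeff 0, G.coeff 1, G.coeff 2, ?_⟩
  generalize G.coeff 0 = g0 at hGe ⊢
  generalize G.coeff 1 = g1 at hGe ⊢
  generalize G.coeff 2 = g2 at hGe ⊢
  have key : ∑ i : Fin 7, Polynomial.C (φ (c i)) * Polynomial.X ^ (i : ℕ) =
      ∑ i : Fin 7, Polynomial.C (cubeVec 1 g0 g1 g2 i) * Polynomial.X ^ (i : ℕ) := by
    rw [← hG, hGe]
    unfold cubeVec
    simp only [Fin.sum_univ_succ, Fin.sum_univ_zero]
    simp [map_ofNat]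
    ring
  intro i
  have := congrArg (fun P => Polynomial.coeff P (i : ℕ)) key
  simpa [Polynomial.finsetSum_coeff, Polynomial.coeff_C_mul, Polynomial.coeff_X_pow,
    Fin.val_inj] using this

theorem three_ne_zero_zmod (p : ℕ) [Fact p.Prime] (hp : p ≠ 3) : (3 : ZMod p) ≠ 0 := by
  intro h
  have : ((3 : ℕ) : ZMod p) = 0 := by exact_mod_cast h
  rw [ZMod.natCast_eq_zero_iff] at this
  exact hp ((Nat.prime_dvd_prime_iff_eq Fact.out Nat.prime_three).1 this)

theorem exists_cubeVec (p : ℕ) [Fact p.Prime] (hp : p ≠ 3) (c : Fin 7 → ZMod p)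
    (h : ¬ Irreducible (sexticCurveBar p c)) :
    ∃ a h0 h1 h2, c = cubeVec a h0 h1 h2 := by
  obtain ⟨g0, g1, g2, hg⟩ := exists_cubeVec_bar p c h
  have h3 := three_ne_zero_zmod p hp
  set φ := algebraMap (ZMod p) (AlgebraicClosure (ZMod p)) with hφ
  have h3' : (3 : AlgebraicClosure (ZMod p)) ≠ 0 := by
    rw [← map_ofNat φ 3]
    exact (map_ne_zero φ).2 h3
  have p3 : φ 3 = 3 := map_ofNat φ 3
  have p6 : φ 6 = 6 := map_ofNat φ 6
  have e0 := hg 0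
  have e1 := hg 1
  have e2 := hg 2
  have e3 := hg 3
  have e4 := hg 4
  have e5 := hg 5
  have e6 := hg 6
  simp [cubeVec] at e0 e1 e2 e3 e4 e5 e6
  by_cases k2 : g2 = 0
  · subst k2
    by_cases k1 : g1 = 0
    · subst k1
      refine ⟨c 0, 1, 0, 0, ?_⟩
      ext i
      apply φ.injective
      fin_cases i <;> simp_all [cubeVec]
    · refine ⟨c 3, c 2 / (3 * c 3), 1, 0, ?_⟩
      ext i
      apply φ.injective
      fin_cases i <;> simp [cubeVec, p3, p6, e0, e1, e2, e3, e4, e5, e6] <;> field_simp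
  · refine ⟨c 6, (c 4 - c 5 ^ 2 / (3 * c 6)) / (3 * c 6), c 5 / (3 * c 6), 1, ?_⟩
    ext i
    apply φ.injective
    fin_cases i <;> simp [cubeVec, p3, p6, e0, e1, e2, e3, e4, e5, e6] <;> field_simp <;> ring

theorem exists_omega (p : ℕ) [Fact p.Prime] (hp : p ≠ 3) :
    ∃ ω : AlgebraicClosure (ZMod p), IsPrimitiveRoot ω 3 := by
  have h3 := three_ne_zero_zmod p hp
  have : NeZero ((3 : ℕ) : AlgebraicClosure (ZMod p)) := ⟨by
    rw [← map_natCast (algebraMap (ZMod p) (AlgebraicClosure (ZMod p)))]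
    exact (map_ne_zero _).2 (by exact_mod_cast h3)⟩
  exact HasEnoughRootsOfUnity.exists_primitiveRoot _ 3

theorem factor_cubeVec (p : ℕ) [Fact p.Prime] (c : Fin 7 → ZMod p) (a : ZMod p)
    (h : MvPolynomial (Fin 2) (ZMod p)) (hc : sexticForm p c = MvPolynomial.C a * h ^ 3)
    (α ω : AlgebraicClosure (ZMod p))
    (hα : α ^ 3 = algebraMap (ZMod p) (AlgebraicClosure (ZMod p)) a) (hω : IsPrimitiveRoot ω 3) :
    sexticCurveBar p c =
            (Polynomial.X - Polynomial.C (MvPolynomial.C α *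
              MvPolynomial.map (algebraMap (ZMod p) (AlgebraicClosure (ZMod p))) h)) *
            (Polynomial.X - Polynomial.C (MvPolynomial.C (ω * α) *
              MvPolynomial.map (algebraMap (ZMod p) (AlgebraicClosure (ZMod p))) h)) *
            (Polynomial.X - Polynomial.C (MvPolynomial.C (ω ^ 2 * α) *
              MvPolynomial.map (algebraMap (ZMod p) (AlgebraicClosure (ZMod p))) h)) := by
  have hs : 1 + ω + ω ^ 2 = 0 := by
    have := hω.geom_sum_eq_zero (by norm_num)
    simpa [Finset.sum_range_succ] using this
  unfold sexticCurveBar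
  rw [hc]
  simp only [map_mul, map_pow, MvPolynomial.map_C, ← hα]
  have hs' := congrArg (fun t => Polynomial.C (MvPolynomial.C (σ := Fin 2) t)) hs
  simp only [map_add, map_one, map_pow, map_zero] at hs'
  generalize Polynomial.C (MvPolynomial.C (σ := Fin 2) ω) = w at hs' ⊢
  generalize Polynomial.C (MvPolynomial.C (σ := Fin 2) α) = b
  generalize Polynomial.C (MvPolynomial.map (algebraMap (ZMod p) (AlgebraicClosure (ZMod p))) h) = k
  generalize (Polynomial.X : Polynomial (MvPolynomial (Fin 2) (AlgebraicClosure (ZMod p)))) = X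
  linear_combination (X ^ 2 * b * k - w * X * b ^ 2 * k ^ 2 + (w - 1) * b ^ 3 * k ^ 3) * hs'

theorem not_irred_cubeVec (p : ℕ) [Fact p.Prime] (hp : p ≠ 3) (a h0 h1 h2 : ZMod p) :
    ¬ Irreducible (sexticCurveBar p (cubeVec a h0 h1 h2)) := by
  obtain ⟨ω, hω⟩ := exists_omega p hp
  obtain ⟨α, hα⟩ := IsAlgClosed.exists_pow_nat_eq
    (algebraMap (ZMod p) (AlgebraicClosure (ZMod p)) a) (n := 3) (by norm_num)
  rw [factor_cubeVec p _ a _ (sexticForm_cubeVec p a h0 h1 h2) α ω hα hω]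
  intro hi
  rcases hi.isUnit_or_isUnit rfl with h | h
  · exact Polynomial.not_isUnit_X_sub_C _ (isUnit_of_mul_isUnit_left h)
  · exact Polynomial.not_isUnit_X_sub_C _ h

/-- Leading nonzero coefficient. -/
def leadC {K : Type*} [Field K] [DecidableEq K] (h0 h1 h2 : K) : K :=
  if h2 ≠ 0 then h2 else if h1 ≠ 0 then h1 else h0

/-- The parametrization of reducible sextics by quadratics. -/
def paramVec {K : Type*} [Field K] [DecidableEq K] (q : K × K × K) : Fin 7 → K :=
  cubeVec ((leadC q.1 q.2.1 q.2.2)⁻¹ ^ 2) q.1 q.2.1 q.2.2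

theorem paramVec_injective {K : Type*} [Field K] [DecidableEq K] (h3 : (3 : K) ≠ 0) :
    Function.Injective (paramVec (K := K)) := by
  rintro ⟨x0, x1, x2⟩ ⟨y0, y1, y2⟩ h
  have c6 : ∀ q : K × K × K, paramVec q 6 = q.2.2 := by
    rintro ⟨q0, q1, q2⟩
    by_cases k : q2 = 0
    · simp [paramVec, cubeVec, k]
    · simp [paramVec, cubeVec, leadC, k]; field_simp
  have e2 : x2 = y2 := by have := congrFun h 6; rwa [c6, c6] at this
  subst e2
  by_cases k2 : x2 = 0
  · subst k2
    have c3 : ∀ q0 q1 : K, paramVec (q0, q1, 0) 3 = q1 := by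
      intro q0 q1
      by_cases k : q1 = 0
      · simp [paramVec, cubeVec, k]
      · simp [paramVec, cubeVec, leadC, k]; field_simp
    have e1 : x1 = y1 := by have := congrFun h 3; rwa [c3, c3] at this
    subst e1
    by_cases k1 : x1 = 0
    · subst k1
      have c0 : ∀ q0 : K, paramVec (q0, 0, 0) 0 = q0 := by
        intro q0
        by_cases k : q0 = 0
        · simp [paramVec, cubeVec, k]
        · simp [paramVec, cubeVec, leadC]; field_simp
      have e0 : x0 = y0 := by have := congrFun h 0; rwa [c0, c0] at this
      rw [e0]
    · have := congrFun h 2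
      simp [paramVec, cubeVec, leadC, k1, h3] at this
      rw [this]
  · have e5 := congrFun h 5
    simp [paramVec, cubeVec, leadC, k2, h3] at e5
    subst e5
    have := congrFun h 4
    simp [paramVec, cubeVec, leadC, k2, h3] at this
    rw [this]

theorem cubeVec_mem_range {K : Type*} [Field K] [DecidableEq K] (a h0 h1 h2 : K) :
    ∃ q, paramVec q = cubeVec a h0 h1 h2 := by
  by_cases ka : a = 0
  · subst ka
    refine ⟨0, ?_⟩
    ext i
    fin_cases i <;> simp [paramVec, cubeVec]
  set v := leadC h0 h1 h2 with hv
  by_cases kv : v = 0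
  · have : h0 = 0 ∧ h1 = 0 ∧ h2 = 0 := by
      unfold leadC at hv
      split_ifs at hv <;> simp_all
    obtain ⟨rfl, rfl, rfl⟩ := this
    refine ⟨0, ?_⟩
    ext i
    fin_cases i <;> simp [paramVec, cubeVec]
  refine ⟨(a * v ^ 2 * h0, a * v ^ 2 * h1, a * v ^ 2 * h2), ?_⟩
  have hl : leadC (a * v ^ 2 * h0) (a * v ^ 2 * h1) (a * v ^ 2 * h2) = a * v ^ 3 := by
    have : leadC (a * v ^ 2 * h0) (a * v ^ 2 * h1) (a * v ^ 2 * h2) = a * v ^ 2 * leadC h0 h1 h2 := by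
      unfold leadC
      simp only [ne_eq, mul_eq_zero, ka, kv, pow_eq_zero_iff, false_or, OfNat.ofNat_ne_zero,
        not_false_eq_true]
      split_ifs <;> rfl
    rw [this, ← hv]; ring
  ext i
  unfold paramVec
  simp only [hl]
  clear_value v
  fin_cases i <;> simp [cubeVec] <;> field_simp

/-- For `p ≠ 3`: if `F = y³ − f(x,z)` is reducible over `F̄_p`, then `f = a·h³` with
`a ∈ F_p`, `h` a binary quadratic form over `F_p`, and `F` factors as
`(y − αh)(y − ωαh)(y − ω²αh)` with `α³ = a` and `ω` a primitive cube root of unity.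
Moreover exactly `p³` coefficient vectors give a non-absolutely-irreducible `F`. -/
theorem sextic_reducible_classification (p : ℕ) [Fact p.Prime] (hp : p ≠ 3) :
    (∀ c : Fin 7 → ZMod p, ¬ Irreducible (sexticCurveBar p c) →
      ∃ (a : ZMod p) (h : MvPolynomial (Fin 2) (ZMod p)),
        h.IsHomogeneous 2 ∧ sexticForm p c = MvPolynomial.C a * h ^ 3 ∧
        ∃ (α ω : AlgebraicClosure (ZMod p)),
          α ^ 3 = algebraMap (ZMod p) (AlgebraicClosure (ZMod p)) a ∧
          IsPrimitiveRoot ω 3 ∧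
          sexticCurveBar p c =
            (Polynomial.X - Polynomial.C (MvPolynomial.C α *
              MvPolynomial.map (algebraMap (ZMod p) (AlgebraicClosure (ZMod p))) h)) *
            (Polynomial.X - Polynomial.C (MvPolynomial.C (ω * α) *
              MvPolynomial.map (algebraMap (ZMod p) (AlgebraicClosure (ZMod p))) h)) *
            (Polynomial.X - Polynomial.C (MvPolynomial.C (ω ^ 2 * α) *
              MvPolynomial.map (algebraMap (ZMod p) (AlgebraicClosure (ZMod p))) h))) ∧
    Nat.card {c : Fin 7 → ZMod p // ¬ Irreducible (sexticCurveBar p c)} = p ^ 3 := by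
  classical
  constructor
  · intro c hc
    obtain ⟨a, h0, h1, h2, rfl⟩ := exists_cubeVec p hp c hc
    obtain ⟨ω, hω⟩ := exists_omega p hp
    obtain ⟨α, hα⟩ := IsAlgClosed.exists_pow_nat_eq
      (algebraMap (ZMod p) (AlgebraicClosure (ZMod p)) a) (n := 3) (by norm_num)
    exact ⟨a, quadForm h0 h1 h2, quadForm_homog h0 h1 h2, sexticForm_cubeVec p a h0 h1 h2,
      α, ω, hα, hω, factor_cubeVec p _ a _ (sexticForm_cubeVec p a h0 h1 h2) α ω hα hω⟩
  · let e : ZMod p × ZMod p × ZMod p → {c : Fin 7 → ZMod p // ¬ Irreducible (sexticCurveBar p c)} :=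
      fun q => ⟨paramVec q, not_irred_cubeVec p hp _ _ _ _⟩
    have he : Function.Bijective e := by
      constructor
      · intro x y hxy
        exact paramVec_injective (three_ne_zero_zmod p hp) (congrArg Subtype.val hxy)
      · rintro ⟨c, hc⟩
        obtain ⟨a, h0, h1, h2, rfl⟩ := exists_cubeVec p hp c hc
        obtain ⟨q, hq⟩ := cubeVec_mem_range a h0 h1 h2
        exact ⟨q, Subtype.ext hq⟩
    rw [← Nat.card_eq_of_bijective e he]
    simp [Nat.card_prod, Nat.card_zmod]
    ring
end

section
/- Let p ≡ 1 (mod 3). Among the p^7 binary sextic forms f over F_p for which y³ = f(x,z) is reducible over F̄_p (i.e., f = a h³), exactly (p³ − 1)/3 give a factorization into three distinct linear factors in y defined over F_p, exactly 2(p³ − 1)/3 give three conjugate factors over F_{p³}, and exactly 1 gives a triple factor (namely f ≡ 0). -/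
/-- The binary sextic form `f(x,z) = Σ_{i=0}^{6} cᵢ xⁱ z^{6−i}` over `F_p`. -/
noncomputable def sexticForm9 (p : ℕ) [Fact p.Prime] (c : Fin 7 → ZMod p) :
    MvPolynomial (Fin 2) (ZMod p) :=
  ∑ i : Fin 7, MvPolynomial.C (c i) * MvPolynomial.X 0 ^ (i : ℕ) *
    MvPolynomial.X 1 ^ (6 - (i : ℕ))

/-- `F = y³ − f(x,z)`, viewed in `F_p[x,z][y]`. -/
noncomputable def sexticCurve9 (p : ℕ) [Fact p.Prime] (c : Fin 7 → ZMod p) :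
    Polynomial (MvPolynomial (Fin 2) (ZMod p)) :=
  Polynomial.X ^ 3 - Polynomial.C (sexticForm9 p c)

open MvPolynomial in
/-- Binary form of degree `n` with coefficients `c`. -/
noncomputable def bform {K : Type*} [Field K] (n : ℕ) (c : Fin (n + 1) → K) :
    MvPolynomial (Fin 2) K :=
  ∑ i : Fin (n + 1), C (c i) * X 0 ^ (i : ℕ) * X 1 ^ (n - (i : ℕ))

/-- The exponent `(i, n - i)`. -/
noncomputable def bexp (n i : ℕ) : Fin 2 →₀ ℕ :=
  Finsupp.single 0 i + Finsupp.single 1 (n - i)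

section
open MvPolynomial
variable {K : Type*} [Field K]

lemma bform_eq (n : ℕ) (c : Fin (n + 1) → K) :
    bform n c = ∑ i : Fin (n + 1), monomial (bexp n i) (c i) := by
  unfold bform bexp
  refine Finset.sum_congr rfl fun i _ => ?_
  rw [X_pow_eq_monomial, X_pow_eq_monomial, C_mul_monomial, monomial_mul]
  simp

lemma coeff_bform (n : ℕ) (c : Fin (n + 1) → K) (i : Fin (n + 1)) :
    coeff (bexp n i) (bform n c) = c i := by
  rw [bform_eq, coeff_sum, Finset.sum_eq_single i]
  · simp
  · intro j _ hj
    rw [coeff_monomial, if_neg]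
    intro h
    apply hj
    have := DFunLike.congr_fun h 0
    simp [bexp] at this
    exact Fin.ext this
  · simp

lemma bform_inj {n : ℕ} {c d : Fin (n + 1) → K} (h : bform n c = bform n d) : c = d := by
  funext i
  rw [← coeff_bform n c i, h, coeff_bform]

lemma bform_zero (n : ℕ) : bform n (0 : Fin (n + 1) → K) = 0 := by simp [bform]

lemma bform_smul (n : ℕ) (a : K) (c : Fin (n + 1) → K) :
    bform n (fun i => a * c i) = C a * bform n c := by
  simp only [bform, Finset.mul_sum]
  refine Finset.sum_congr rfl fun i _ => ?_
  rw [C_mul]; ring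

lemma bform_map {L : Type*} [Field L] (φ : K →+* L) (n : ℕ) (c : Fin (n + 1) → K) :
    map φ (bform n c) = bform n (fun i => φ (c i)) := by
  simp [bform, map_sum]

lemma bform_hom (n : ℕ) (c : Fin (n + 1) → K) : (bform n c).IsHomogeneous n := by
  rw [bform_eq]
  refine IsHomogeneous.sum _ _ _ fun i _ => isHomogeneous_monomial _ ?_
  have := i.2
  simp only [bexp, map_add, Finsupp.degree_single]
  omega

lemma exists_bform {n : ℕ} {g : MvPolynomial (Fin 2) K} (hg : g.IsHomogeneous n) :
    ∃ c, g = bform n c := by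
  refine ⟨fun i => coeff (bexp n i) g, ?_⟩
  ext d
  by_cases hd : d.degree = n
  · have h2 : d 0 + d 1 = n := by
      rw [← hd, Finsupp.degree_eq_sum]; simp
    have : d = bexp n ((⟨d 0, by omega⟩ : Fin (n + 1)) : ℕ) := by
      ext k
      fin_cases k
      · simp [bexp]
      · simp [bexp]; omega
    rw [this, coeff_bform]
  · rw [hg.coeff_eq_zero hd, (bform_hom _ _).coeff_eq_zero hd]

/-- `g(x,z) ↦ g(tx,tz)`. -/
noncomputable def scaleHom : MvPolynomial (Fin 2) K →+* Polynomial (MvPolynomial (Fin 2) K) :=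
  eval₂Hom (Polynomial.C.comp C) (fun i => Polynomial.C (X i) * Polynomial.X)

lemma scaleHom_hom {n : ℕ} {g : MvPolynomial (Fin 2) K} (hg : g.IsHomogeneous n) :
    scaleHom g = Polynomial.C g * Polynomial.X ^ n := by
  obtain ⟨c, rfl⟩ := exists_bform hg
  simp only [bform, map_sum, Finset.sum_mul]
  refine Finset.sum_congr rfl fun i _ => ?_
  have : Polynomial.X ^ n = (Polynomial.X ^ (i : ℕ) * Polynomial.X ^ (n - (i : ℕ)) :
      Polynomial (MvPolynomial (Fin 2) K)) := by
    rw [← pow_add]; congr 1; have := i.2; omega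
  rw [this]
  simp [scaleHom]
  ring

lemma scaleHom_eval (g : MvPolynomial (Fin 2) K) :
    Polynomial.eval 1 (scaleHom g) = g := by
  have : (Polynomial.evalRingHom (1 : MvPolynomial (Fin 2) K)).comp scaleHom = RingHom.id _ := by
    apply MvPolynomial.ringHom_ext <;> intro r <;> simp [scaleHom]
  exact DFunLike.congr_fun this g

lemma scaleHom_coeff (g : MvPolynomial (Fin 2) K) (n : ℕ) :
    (scaleHom g).coeff n = homogeneousComponent n g := by
  conv_lhs => rw [← sum_homogeneousComponent g]
  rw [map_sum, Polynomial.finsetSum_coeff]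
  simp_rw [scaleHom_hom (homogeneousComponent_isHomogeneous _ g), Polynomial.coeff_C_mul_X_pow]
  rw [Finset.sum_ite_eq]
  split_ifs with h
  · rfl
  · rw [homogeneousComponent_eq_zero]
    simp at h; omega

lemma hom_of_cube {g f : MvPolynomial (Fin 2) K} (hf : f.IsHomogeneous 6) (h : g ^ 3 = f) :
    g.IsHomogeneous 2 := by
  by_cases hg0 : g = 0
  · rw [hg0]; exact isHomogeneous_zero _ _ _
  have h1 : scaleHom g ^ 3 = Polynomial.C f * Polynomial.X ^ 6 := by
    rw [← map_pow, h, scaleHom_hom hf]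
  have h2 : (Polynomial.X ^ 2 : Polynomial (MvPolynomial (Fin 2) K)) ^ 3 ∣ scaleHom g ^ 3 := by
    rw [h1, ← pow_mul]; exact dvd_mul_left _ _
  have h3 := (IsIntegrallyClosed.pow_dvd_pow_iff (by norm_num)).1 h2
  obtain ⟨H, hH⟩ := h3
  have h4 : H ^ 3 = Polynomial.C f := by
    have h5 : (Polynomial.X ^ 6 : Polynomial (MvPolynomial (Fin 2) K)) ≠ 0 :=
      pow_ne_zero _ Polynomial.X_ne_zero
    apply mul_left_cancel₀ h5
    rw [mul_comm _ (Polynomial.C f), ← h1, hH]; ring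
  have h6 : H.natDegree = 0 := by
    have := congrArg Polynomial.natDegree h4
    rw [Polynomial.natDegree_pow, Polynomial.natDegree_C] at this
    omega
  rw [Polynomial.natDegree_eq_zero] at h6
  obtain ⟨k, rfl⟩ := h6
  have h7 : g = k := by
    rw [← scaleHom_eval g, hH]; simp
  have h8 := scaleHom_coeff g 2
  rw [hH] at h8
  simp at h8
  rw [h7, h8]
  exact homogeneousComponent_isHomogeneous _ _

lemma cube_cases {R : Type*} [CommRing R] [IsDomain R] {w A B : R} (hw : w ^ 2 + w + 1 = 0)
    (h : A ^ 3 = B ^ 3) : A = B ∨ A = w * B ∨ A = w ^ 2 * B := by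
  have : (A - B) * ((A - w * B) * (A - w ^ 2 * B)) = 0 := by
    linear_combination h + (-A^2*B + w * A * B^2 - (w-1)*B^3) * hw
  rcases mul_eq_zero.1 this with h | h
  · left; exact sub_eq_zero.1 h
  rcases mul_eq_zero.1 h with h | h
  · right; left; exact sub_eq_zero.1 h
  · right; right; exact sub_eq_zero.1 h

lemma curve_factor {R : Type*} [CommRing R] {w A : R} (hw : w ^ 2 + w + 1 = 0) :
    (Polynomial.X ^ 3 - Polynomial.C (A ^ 3) : Polynomial R) =
      (Polynomial.X - Polynomial.C A) * (Polynomial.X - Polynomial.C (w * A)) *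
        (Polynomial.X - Polynomial.C (w ^ 2 * A)) := by
  have hw' : (Polynomial.C w) ^ 2 + Polynomial.C w + 1 = 0 := by
    rw [← Polynomial.C_pow, ← Polynomial.C_add, ← Polynomial.C_1, ← Polynomial.C_add, hw,
      Polynomial.C_0]
  simp only [Polynomial.C_pow, Polynomial.C_mul]
  generalize Polynomial.C w = w at *
  generalize Polynomial.C A = B at *
  generalize (Polynomial.X : Polynomial R) = A at *
  linear_combination -(-A^2*B + w * A * B^2 - (w-1)*B^3) * hw'
end

lemma exists_gen (p : ℕ) [Fact p.Prime] (hp : p % 3 = 1) :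
    ∃ r w : ZMod p, r ≠ 0 ∧ w ^ 2 + w + 1 = 0 ∧
      (∀ a : ZMod p, a ≠ 0 → ∃ b : ZMod p, b ≠ 0 ∧ (a = b ^ 3 ∨ a = r * b ^ 3 ∨ a = r ^ 2 * b ^ 3)) ∧
      ∀ b : ZMod p, b ^ 3 ≠ r := by
  have hp2 := (Fact.out : p.Prime).two_le
  obtain ⟨r, hzp⟩ := IsCyclic.exists_generator (α := (ZMod p)ˣ)
  have hr := orderOf_eq_card_of_forall_mem_zpowers hzp
  have hgen : ∀ a : (ZMod p)ˣ, ∃ k : ℕ, r ^ k = a := by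
    intro a
    have := mem_powers_iff_mem_zpowers.2 (hzp a)
    exact this
  rw [Nat.card_eq_fintype_card, ZMod.card_units] at hr
  obtain ⟨m, hm⟩ : ∃ m, p = 3 * m + 1 := ⟨p / 3, by omega⟩
  refine ⟨r, (r : ZMod p) ^ m, r.ne_zero, ?_, ?_, ?_⟩
  · have h1 : ((r : ZMod p) ^ m) ^ 3 = 1 := by
      rw [← pow_mul, show m * 3 = p - 1 by omega, ← hr, ← Units.val_pow_eq_pow_val,
        pow_orderOf_eq_one, Units.val_one]
    have h2 : (r : ZMod p) ^ m ≠ 1 := by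
      intro h
      have h3 : r ^ m = 1 := by ext; simpa using h
      have := Nat.le_of_dvd (by omega) (orderOf_dvd_of_pow_eq_one h3)
      omega
    have h3 : ((r : ZMod p) ^ m - 1) * (((r : ZMod p) ^ m) ^ 2 + (r : ZMod p) ^ m + 1) = 0 := by
      linear_combination h1
    exact (mul_eq_zero.1 h3).resolve_left (sub_ne_zero.2 h2)
  · intro a ha
    obtain ⟨k, hk⟩ := hgen (Units.mk0 a ha)
    have hk' : a = (r : ZMod p) ^ k := by
      rw [← Units.val_pow_eq_pow_val, hk]; rfl
    refine ⟨(r : ZMod p) ^ (k / 3), pow_ne_zero _ r.ne_zero, ?_⟩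
    rw [hk', ← pow_mul]
    have h3 : k % 3 = 0 ∨ k % 3 = 1 ∨ k % 3 = 2 := by omega
    rcases h3 with h | h | h
    · left; congr 1; omega
    · right; left; rw [← pow_succ']; congr 1; omega
    · right; right; rw [← pow_add]; congr 1; omega
  · intro b hb
    have hb0 : b ≠ 0 := by
      rintro rfl
      exact r.ne_zero (by rw [← hb]; simp)
    obtain ⟨k, hk⟩ := hgen (Units.mk0 b hb0)
    have h1 : r ^ (k * 3) = r ^ 1 := by
      rw [pow_mul, hk]; ext; simpa using hb
    rw [pow_eq_pow_iff_modEq, hr] at h1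
    have h2 : k * 3 ≡ 1 [MOD 3] := h1.of_dvd ⟨m, by omega⟩
    simp [Nat.ModEq] at h2

lemma exists_cbrt (p : ℕ) [Fact p.Prime] (hp : p % 3 = 1) (a : ZMod p) (ha : a ≠ 0) :
    ∃ u : GaloisField p 3, u ^ 3 = algebraMap (ZMod p) (GaloisField p 3) a := by
  have hp2 := (Fact.out : p.Prime).two_le
  have := Fintype.ofFinite (GaloisField p 3)
  obtain ⟨r, hzp⟩ := IsCyclic.exists_generator (α := (GaloisField p 3)ˣ)
  have hr := orderOf_eq_card_of_forall_mem_zpowers hzp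
  have hA : algebraMap (ZMod p) (GaloisField p 3) a ≠ 0 := by simpa using ha
  obtain ⟨k, hk⟩ := mem_powers_iff_mem_zpowers.2
    (hzp (Units.mk0 _ hA))
  simp only at hk
  rw [Nat.card_units, GaloisField.card p 3 (by norm_num)] at hr
  have h1 : r ^ (k * (p - 1)) = 1 := by
    rw [pow_mul, hk]; ext
    simp [← map_pow, ZMod.pow_card_sub_one_eq_one ha]
  have h2 := orderOf_dvd_of_pow_eq_one h1
  have h3 : 3 * (p - 1) ∣ p ^ 3 - 1 := by
    obtain ⟨m, hm⟩ : ∃ m, p = 3 * m + 1 := ⟨p / 3, by omega⟩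
    refine ⟨3 * m ^ 2 + 3 * m + 1, ?_⟩
    have : p ^ 3 = 3 * (p - 1) * (3 * m ^ 2 + 3 * m + 1) + 1 := by
      rw [show p - 1 = 3 * m by omega, hm]; ring
    omega
  rw [hr] at h2
  obtain ⟨j, rfl⟩ := Nat.dvd_of_mul_dvd_mul_right (by omega) (h3.trans h2)
  refine ⟨((r ^ j : (GaloisField p 3)ˣ) : GaloisField p 3), ?_⟩
  rw [← Units.val_pow_eq_pow_val, ← pow_mul, mul_comm, hk]; rfl

lemma mem_range_of_frob (p : ℕ) [Fact p.Prime] (x : GaloisField p 3) (hx : x ^ p = x) :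
    ∃ a, algebraMap (ZMod p) (GaloisField p 3) a = x := by
  have h := (Subfield.mem_bot_iff_pow_eq_self (GaloisField p 3) p).2 hx
  have h2 : (⊥ : Subfield (GaloisField p 3)) ≤
    (algebraMap (ZMod p) (GaloisField p 3)).fieldRange := bot_le
  exact h2 h

section
open MvPolynomial

lemma lc_rel {K : Type*} [Field K] {a b : K} {h k : MvPolynomial (Fin 2) K}
    (hk : k ≠ 0) (e : C a * h ^ 3 = C b * k ^ 3) :
    ∃ s t : K, t ≠ 0 ∧ a * s ^ 3 = b * t ^ 3 := by
  refine ⟨MonomialOrder.lex.leadingCoeff h, MonomialOrder.lex.leadingCoeff k, ?_, ?_⟩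
  · simpa using hk
  · have := congrArg (MonomialOrder.lex.leadingCoeff) e
    simpa [MonomialOrder.leadingCoeff_mul, MonomialOrder.leadingCoeff_pow] using this

/-- Sextics `a h³` with `h` a nonzero quadratic form. -/
def cubeSet (p : ℕ) [Fact p.Prime] (a : ZMod p) : Set (Fin 7 → ZMod p) :=
  {c | ∃ q : Fin 3 → ZMod p, q ≠ 0 ∧ bform 6 c = C a * bform 2 q ^ 3}

lemma bform_ne_zero {K : Type*} [Field K] {n : ℕ} {q : Fin (n + 1) → K} (hq : q ≠ 0) :
    bform n q ≠ 0 := by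
  rw [← bform_zero n]
  exact fun h => hq (bform_inj h)

lemma w_ne (p : ℕ) [Fact p.Prime] (hp : p % 3 = 1) {w : ZMod p} (hw : w ^ 2 + w + 1 = 0) :
    w ≠ 0 ∧ w ≠ 1 ∧ w ^ 2 ≠ 1 ∧ w ≠ w ^ 2 := by
  have h3 : (3 : ZMod p) ≠ 0 := by
    intro h
    have h' : ((3 : ℕ) : ZMod p) = 0 := by exact_mod_cast h
    rw [ZMod.natCast_eq_zero_iff] at h'
    have := (Nat.prime_dvd_prime_iff_eq Fact.out Nat.prime_three).1 h'
    omega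
  have h0 : w ≠ 0 := by rintro rfl; simp at hw
  have h1 : w ≠ 1 := by
    rintro rfl; apply h3; linear_combination hw
  refine ⟨h0, h1, ?_, ?_⟩
  · intro h; apply h3
    have : w = -2 := by linear_combination hw - h
    subst this; linear_combination h
  · intro h
    apply h1
    exact mul_left_cancel₀ h0 (by linear_combination -h)

lemma card_cubeSet (p : ℕ) [Fact p.Prime] (hp : p % 3 = 1) {a w : ZMod p} (ha : a ≠ 0)
    (hw : w ^ 2 + w + 1 = 0) : 3 * (cubeSet p a).ncard = p ^ 3 - 1 := by
  classical
  obtain ⟨hw0, hw1, hw2, hw3⟩ := w_ne p hp hw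
  have hw33 : w ^ 3 = 1 := by linear_combination (w - 1) * hw
  have hex : ∀ q : Fin 3 → ZMod p, ∃ c : Fin 7 → ZMod p, C a * bform 2 q ^ 3 = bform 6 c := by
    intro q
    apply exists_bform
    have := ((bform_hom 2 q).pow 3).C_mul a
    simpa using this
  choose Φ hΦ using hex
  let T : Finset (Fin 3 → ZMod p) := Finset.univ.erase 0
  have hS : cubeSet p a = ↑(T.image Φ) := by
    ext c
    simp only [cubeSet, Set.mem_ofPred_eq, Finset.coe_image, Set.mem_image, T]
    constructor
    · rintro ⟨q, hq, h⟩
      exact ⟨q, by simpa using hq, bform_inj (by rw [← hΦ, h])⟩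
    · rintro ⟨q, hq, rfl⟩
      exact ⟨q, by simpa using hq, (hΦ q).symm⟩
  have hT : T.card = p ^ 3 - 1 := by
    simp [T, Finset.card_erase_of_mem, ZMod.card]
  rw [hS, Set.ncard_coe_finset, ← hT, Finset.card_eq_sum_card_image Φ T, Finset.sum_const_nat (m := 3),
    mul_comm]
  intro c hc
  obtain ⟨q, hq, rfl⟩ := Finset.mem_image.1 hc
  have hq0 : q ≠ 0 := by simpa [T] using hq
  rw [Finset.card_eq_three]
  obtain ⟨i, hi⟩ := Function.ne_iff.1 hq0
  simp only [Pi.zero_apply] at hi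
  have hfib : ∀ b : ZMod p, b ^ 3 = 1 → (fun i => b * q i) ∈ T ∧ Φ (fun i => b * q i) = Φ q := by
    intro b hb
    have hb0 : b ≠ 0 := by rintro rfl; simp at hb
    constructor
    · simp only [T, Finset.mem_erase, Finset.mem_univ, and_true]
      exact Function.ne_iff.2 ⟨i, by simpa using ⟨hb0, hi⟩⟩
    · apply bform_inj (n := 6)
      rw [← hΦ, ← hΦ, bform_smul, mul_pow, ← C_pow, hb]; simp
  refine ⟨q, fun i => w * q i, fun i => w ^ 2 * q i, ?_, ?_, ?_, ?_⟩
  · intro h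
    have := congrFun h i
    exact hw1 (mul_right_cancel₀ hi (by simpa using this.symm))
  · intro h
    have := congrFun h i
    exact hw2 (mul_right_cancel₀ hi (by simpa using this.symm))
  · intro h
    have := congrFun h i
    exact hw3 (mul_right_cancel₀ hi this)
  · ext q'
    simp only [Finset.mem_filter, Finset.mem_insert, Finset.mem_singleton]
    constructor
    · rintro ⟨-, h⟩
      have h1 : bform 2 q' ^ 3 = bform 2 q ^ 3 := by
        have : C a * bform 2 q' ^ 3 = C a * bform 2 q ^ 3 := by rw [hΦ, hΦ, h]
        exact mul_left_cancel₀ (by simpa using ha) this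
      have hw' : (C w : MvPolynomial (Fin 2) (ZMod p)) ^ 2 + C w + 1 = 0 := by
        rw [← C_pow, ← C_add, ← C_1, ← C_add, hw, C_0]
      rcases cube_cases hw' h1 with h | h | h
      · left; exact bform_inj h
      · right; left; rw [← bform_smul] at h; exact bform_inj h
      · right; right; rw [← C_pow, ← bform_smul] at h; exact bform_inj h
    · rintro (rfl | rfl | rfl)
      · exact ⟨hq, rfl⟩
      · exact hfib w hw33
      · exact hfib (w ^ 2) (by rw [← pow_mul, mul_comm, pow_mul, hw33, one_pow])

lemma sexticForm9_eq (p : ℕ) [Fact p.Prime] (c : Fin 7 → ZMod p) :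
    sexticForm9 p c = bform 6 c := rfl

lemma cube_of_factor {R : Type*} [CommRing R] {f h₁ h₂ h₃ : R}
    (h : (Polynomial.X ^ 3 - Polynomial.C f : Polynomial R) =
      (Polynomial.X - Polynomial.C h₁) * (Polynomial.X - Polynomial.C h₂) *
        (Polynomial.X - Polynomial.C h₃)) : h₁ ^ 3 = f ∧ h₂ ^ 3 = f ∧ h₃ ^ 3 = f := by
  refine ⟨?_, ?_, ?_⟩
  · have := congrArg (Polynomial.eval h₁) h
    simpa [sub_eq_zero] using this
  · have := congrArg (Polynomial.eval h₂) h
    simpa [sub_eq_zero] using this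
  · have := congrArg (Polynomial.eval h₃) h
    simpa [sub_eq_zero] using this

lemma set1_iff (p : ℕ) [Fact p.Prime] (hp : p % 3 = 1) {w : ZMod p} (hw : w ^ 2 + w + 1 = 0)
    (c : Fin 7 → ZMod p) :
    ((∃ (a : ZMod p) (h : MvPolynomial (Fin 2) (ZMod p)),
          sexticForm9 p c = MvPolynomial.C a * h ^ 3) ∧
        ∃ h₁ h₂ h₃ : MvPolynomial (Fin 2) (ZMod p), h₁ ≠ h₂ ∧ h₁ ≠ h₃ ∧ h₂ ≠ h₃ ∧
          sexticCurve9 p c =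
            (Polynomial.X - Polynomial.C h₁) * (Polynomial.X - Polynomial.C h₂) *
              (Polynomial.X - Polynomial.C h₃)) ↔ c ∈ cubeSet p 1 := by
  obtain ⟨hw0, hw1, hw2, hw3⟩ := w_ne p hp hw
  have hw' : (C w : MvPolynomial (Fin 2) (ZMod p)) ^ 2 + C w + 1 = 0 := by
    rw [← C_pow, ← C_add, ← C_1, ← C_add, hw, C_0]
  constructor
  · rintro ⟨-, h₁, h₂, h₃, h12, h13, h23, h⟩
    obtain ⟨e1, e2, e3⟩ := cube_of_factor h
    rw [sexticForm9_eq] at e1 e2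
    obtain ⟨q, rfl⟩ := exists_bform (hom_of_cube (bform_hom 6 c) e1)
    refine ⟨q, ?_, by rw [e1]; simp⟩
    rintro rfl
    apply h12
    rw [bform_zero] at e1 ⊢
    rw [← e1] at e2
    have : h₂ ^ 3 = 0 := by rw [e2]; simp
    exact (pow_eq_zero_iff (by norm_num)).1 this |>.symm
  · rintro ⟨q, hq, h⟩
    have hq' := bform_ne_zero hq
    refine ⟨⟨1, bform 2 q, h⟩, bform 2 q, C w * bform 2 q, C w ^ 2 * bform 2 q, ?_, ?_, ?_, ?_⟩
    · intro e
      have : C 1 = (C w : MvPolynomial (Fin 2) (ZMod p)) :=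
        mul_right_cancel₀ hq' (by simpa using e)
      exact hw1 (C_injective _ _ this).symm
    · intro e
      have : C 1 = (C (w ^ 2) : MvPolynomial (Fin 2) (ZMod p)) :=
        mul_right_cancel₀ hq' (by simpa using e)
      exact hw2 (C_injective _ _ this).symm
    · intro e
      have : C w = (C (w ^ 2) : MvPolynomial (Fin 2) (ZMod p)) :=
        mul_right_cancel₀ hq' (by simpa using e)
      exact hw3 (C_injective _ _ this)
    · rw [sexticCurve9, sexticForm9_eq, h, ← curve_factor hw', C_1, one_mul]

lemma set3_iff (p : ℕ) [Fact p.Prime] (hp : p % 3 = 1) (c : Fin 7 → ZMod p) :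
    (∃ h : MvPolynomial (Fin 2) (ZMod p),
          sexticCurve9 p c = (Polynomial.X - Polynomial.C h) ^ 3) ↔ c = 0 := by
  constructor
  · rintro ⟨h, e⟩
    have e' := e
    rw [pow_succ, pow_two] at e'
    obtain ⟨e1, -, -⟩ := cube_of_factor e'
    rw [sexticForm9_eq] at e1
    obtain ⟨r, w, -, hw, -⟩ := exists_gen p hp
    obtain ⟨hw0, hw1, hw2, hw3⟩ := w_ne p hp hw
    have e2 := congrArg (Polynomial.eval (C w * h)) e
    have hw33 : w ^ 3 = 1 := by linear_combination (w - 1) * hw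
    rw [sexticCurve9, sexticForm9_eq, ← e1] at e2
    simp only [Polynomial.eval_sub, Polynomial.eval_pow, Polynomial.eval_X, Polynomial.eval_C,
      mul_pow, ← C_pow, hw33, C_1, one_mul, sub_self] at e2
    have e3 := (pow_eq_zero_iff (by norm_num)).1 e2.symm
    have e4 : C (w - 1) * h = 0 := by rw [C_sub, C_1]; linear_combination e3
    have e5 : h = 0 := (mul_eq_zero.1 e4).resolve_left (by
      rw [C_eq_zero, sub_eq_zero]; exact hw1)
    apply bform_inj (n := 6)
    rw [bform_zero, ← e1, e5]; simp
  · rintro rfl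
    exact ⟨0, by rw [sexticCurve9, sexticForm9_eq, bform_zero]; simp⟩

lemma curve_map (p : ℕ) [Fact p.Prime] (c : Fin 7 → ZMod p) :
    Polynomial.map (MvPolynomial.map (algebraMap (ZMod p) (GaloisField p 3)) : _ →+* _)
              (sexticCurve9 p c) = Polynomial.X ^ 3 -
      Polynomial.C (MvPolynomial.map (algebraMap (ZMod p) (GaloisField p 3)) (bform 6 c)) := by
  simp [sexticCurve9, sexticForm9_eq]

/-- Second set. -/
def set2Prop (p : ℕ) [Fact p.Prime] (c : Fin 7 → ZMod p) : Prop :=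
   ∃ g₁ g₂ g₃ : MvPolynomial (Fin 2) (GaloisField p 3),
          Polynomial.map
              (MvPolynomial.map (algebraMap (ZMod p) (GaloisField p 3)) : _ →+* _)
              (sexticCurve9 p c) =
            (Polynomial.X - Polynomial.C g₁) * (Polynomial.X - Polynomial.C g₂) *
              (Polynomial.X - Polynomial.C g₃) ∧
          ∀ g ∈ ({g₁, g₂, g₃} : Set (MvPolynomial (Fin 2) (GaloisField p 3))),
            g ∉ Set.range (MvPolynomial.map (algebraMap (ZMod p) (GaloisField p 3)))

lemma set2_of_cubeSet (p : ℕ) [Fact p.Prime] (hp : p % 3 = 1) {a w : ZMod p}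
    (hw : w ^ 2 + w + 1 = 0) (ha0 : a ≠ 0) (ha : ∀ b, b ^ 3 ≠ a) {c : Fin 7 → ZMod p}
    (hc : c ∈ cubeSet p a) : set2Prop p c := by
  obtain ⟨q, hq, h⟩ := hc
  obtain ⟨u, hu⟩ := exists_cbrt p hp a ha0
  let α := algebraMap (ZMod p) (GaloisField p 3)
  have hinj : Function.Injective (MvPolynomial.map (σ := Fin 2) α) :=
    MvPolynomial.map_injective _ α.injective
  have hw' : (C (α w) : MvPolynomial (Fin 2) (GaloisField p 3)) ^ 2 + C (α w) + 1 = 0 := by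
    rw [← C_pow, ← C_add, ← C_1, ← C_add, ← map_pow, ← map_add, ← map_one α, ← map_add, hw,
      map_zero, C_0]
  have hf : MvPolynomial.map α (bform 6 c) = (C u * MvPolynomial.map α (bform 2 q)) ^ 3 := by
    rw [h, mul_pow, ← C_pow, hu]; simp [α]
  have hfac := curve_factor (A := C u * MvPolynomial.map α (bform 2 q)) hw'
  rw [← hf, ← curve_map] at hfac
  refine ⟨_, _, _, hfac, ?_⟩
  have hcubes := hfac
  rw [curve_map] at hcubes
  obtain ⟨e1, e2, e3⟩ := cube_of_factor hcubes
  have key : ∀ g : MvPolynomial (Fin 2) (GaloisField p 3),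
      g ^ 3 = MvPolynomial.map α (bform 6 c) → g ∉ Set.range (MvPolynomial.map α) := by
    rintro g hg ⟨k, rfl⟩
    rw [← map_pow] at hg
    have hk := hinj hg
    rw [h] at hk
    obtain ⟨s, t, ht, hst⟩ := lc_rel (a := 1) (b := a) (h := k) (bform_ne_zero hq) (by rw [C_1, one_mul, hk])
    apply ha (s / t)
    rw [div_pow, div_eq_iff (pow_ne_zero _ ht)]
    linear_combination hst
  rintro g (rfl | rfl | rfl)
  · exact key _ e1
  · exact key _ e2
  · exact key _ e3

lemma cubeSet_of_set2 (p : ℕ) [Fact p.Prime] {w : ZMod p}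
    (hw : w ^ 2 + w + 1 = 0) {c : Fin 7 → ZMod p}
    (hc : set2Prop p c) : ∃ a, a ≠ 0 ∧ (∀ b, b ^ 3 ≠ a) ∧ c ∈ cubeSet p a := by
  obtain ⟨g, g₂, g₃, hfac, hg⟩ := hc
  rw [curve_map] at hfac
  obtain ⟨e, -, -⟩ := cube_of_factor hfac
  have hgr := hg g (by simp)
  clear hg hfac
  let α := algebraMap (ZMod p) (GaloisField p 3)
  have hinj : Function.Injective (MvPolynomial.map (σ := Fin 2) α) :=
    MvPolynomial.map_injective _ α.injective
  have hw' : (C (α w) : MvPolynomial (Fin 2) (GaloisField p 3)) ^ 2 + C (α w) + 1 = 0 := by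
    rw [← C_pow, ← C_add, ← C_1, ← C_add, ← map_pow, ← map_add, ← map_one α, ← map_add, hw,
      map_zero, C_0]
  have hw33 : w ^ 3 = 1 := by linear_combination (w - 1) * hw
  have hgh := hom_of_cube ((bform_hom 6 c).map _) e
  obtain ⟨q, rfl⟩ := exists_bform hgh
  have hq : q ≠ 0 := by
    rintro rfl
    exact hgr ⟨0, by rw [bform_zero]; simp⟩
  let σ := frobenius (GaloisField p 3) p
  have hσα : ∀ x, σ (α x) = α x := by
    intro x
    simp only [σ, frobenius_def, ← map_pow, ZMod.pow_card]
  -- the Frobenius multiplies `g` by a cube root of unity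
  have h1 : bform 2 (fun i => σ (q i)) ^ 3 = bform 2 q ^ 3 := by
    rw [← bform_map, ← map_pow, e, bform_map, bform_map]
    congr 1
    funext i
    exact hσα _
  obtain ⟨z, hz, hzq⟩ : ∃ z : GaloisField p 3, z ^ 3 = 1 ∧ ∀ i, σ (q i) = z * q i := by
    rcases cube_cases hw' h1 with h | h | h
    · exact ⟨1, by simp, fun i => by simpa using congrFun (bform_inj h) i⟩
    · rw [← bform_smul] at h
      exact ⟨α w, by rw [← map_pow, hw33, map_one], fun i => congrFun (bform_inj h) i⟩
    · rw [← C_pow, ← bform_smul] at h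
      exact ⟨α w ^ 2, by rw [← pow_mul, mul_comm, pow_mul, ← map_pow, hw33, map_one, one_pow],
        fun i => congrFun (bform_inj h) i⟩
  obtain ⟨i, hi⟩ := Function.ne_iff.1 hq
  simp only [Pi.zero_apply] at hi
  have hz0 : z ≠ 0 := by rintro rfl; simp at hz
  have h2 : ∀ j, ∃ b, α b = q j / q i := by
    intro j
    apply mem_range_of_frob
    change σ (q j / q i) = _
    rw [map_div₀, hzq, hzq, mul_div_mul_left _ _ hz0]
  choose k hk using h2
  obtain ⟨a, ha⟩ : ∃ a, α a = q i ^ 3 := by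
    apply mem_range_of_frob
    change σ (q i ^ 3) = _
    rw [map_pow, hzq, mul_pow, hz, one_mul]
  have h3 : bform 2 q = C (q i) * MvPolynomial.map α (bform 2 k) := by
    rw [bform_map, ← bform_smul]
    congr 1
    funext j
    rw [hk]; field_simp
  have h4 : bform 6 c = C a * bform 2 k ^ 3 := by
    apply hinj
    rw [← e, h3, mul_pow, ← C_pow, ← ha]; simp
  have hk0 : k ≠ 0 := by
    rintro rfl
    have := hk i
    rw [div_self hi] at this
    simp at this
  refine ⟨a, ?_, ?_, k, hk0, h4⟩
  · rintro rfl
    rw [map_zero] at ha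
    exact hi ((pow_eq_zero_iff (by norm_num)).1 ha.symm)
  · rintro b rfl
    have h5 : bform 2 q ^ 3 = (MvPolynomial.map α (C b * bform 2 k)) ^ 3 := by
      rw [e, h4, ← map_pow, mul_pow, ← C_pow]
    apply hgr
    rcases cube_cases hw' h5 with h | h | h
    · exact ⟨_, h.symm⟩
    · exact ⟨C w * (C b * bform 2 k), by rw [h]; simp [α]⟩
    · exact ⟨C w ^ 2 * (C b * bform 2 k), by rw [h]; simp [α]⟩

lemma cubeSet_mul_cube (p : ℕ) [Fact p.Prime] {a b : ZMod p} (hb : b ≠ 0) {c : Fin 7 → ZMod p}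
    (hc : c ∈ cubeSet p (a * b ^ 3)) : c ∈ cubeSet p a := by
  obtain ⟨q, hq, h⟩ := hc
  refine ⟨fun i => b * q i, ?_, ?_⟩
  · obtain ⟨i, hi⟩ := Function.ne_iff.1 hq
    exact Function.ne_iff.2 ⟨i, by simpa using ⟨hb, hi⟩⟩
  · rw [h, bform_smul, C_mul, C_pow]; ring
end

/-- For `p ≡ 1 (mod 3)`: among reducible `y³ = f(x,z)` (i.e. `f = a·h³`), exactly
`(p³−1)/3` factor into three distinct linear factors in `y` over `F_p`, exactly
`2(p³−1)/3` have three conjugate factors over `F_{p³}` (none defined over `F_p`),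
and exactly `1` has a triple factor. -/
theorem sextic_reducible_counts_one_mod_three (p : ℕ) [Fact p.Prime] (hp : p % 3 = 1) :
    Nat.card {c : Fin 7 → ZMod p //
        (∃ (a : ZMod p) (h : MvPolynomial (Fin 2) (ZMod p)),
          sexticForm9 p c = MvPolynomial.C a * h ^ 3) ∧
        ∃ h₁ h₂ h₃ : MvPolynomial (Fin 2) (ZMod p), h₁ ≠ h₂ ∧ h₁ ≠ h₃ ∧ h₂ ≠ h₃ ∧
          sexticCurve9 p c =
            (Polynomial.X - Polynomial.C h₁) * (Polynomial.X - Polynomial.C h₂) *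
              (Polynomial.X - Polynomial.C h₃)} = (p ^ 3 - 1) / 3 ∧
    Nat.card {c : Fin 7 → ZMod p //
        ∃ g₁ g₂ g₃ : MvPolynomial (Fin 2) (GaloisField p 3),
          Polynomial.map
              (MvPolynomial.map (algebraMap (ZMod p) (GaloisField p 3)) : _ →+* _)
              (sexticCurve9 p c) =
            (Polynomial.X - Polynomial.C g₁) * (Polynomial.X - Polynomial.C g₂) *
              (Polynomial.X - Polynomial.C g₃) ∧
          ∀ g ∈ ({g₁, g₂, g₃} : Set (MvPolynomial (Fin 2) (GaloisField p 3))),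
            g ∉ Set.range (MvPolynomial.map (algebraMap (ZMod p) (GaloisField p 3)))}
      = 2 * (p ^ 3 - 1) / 3 ∧
    Nat.card {c : Fin 7 → ZMod p //
        ∃ h : MvPolynomial (Fin 2) (ZMod p),
          sexticCurve9 p c = (Polynomial.X - Polynomial.C h) ^ 3} = 1 := by
  obtain ⟨r, w, hr0, hw, hcl, hr⟩ := exists_gen p hp
  have hr2 : ∀ b : ZMod p, b ^ 3 ≠ r ^ 2 := by
    intro b hb
    have hb0 : b ≠ 0 := by
      rintro rfl
      exact pow_ne_zero 2 hr0 (by rw [← hb]; simp)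
    apply hr (r / b)
    rw [div_pow, hb]; field_simp
  refine ⟨?_, ?_, ?_⟩
  · have h1 := card_cubeSet p hp one_ne_zero hw
    have h2 : {c | _} = cubeSet p 1 := Set.ext (set1_iff p hp hw)
    have h3 := congrArg Set.ncard h2
    rw [← Nat.card_coe_set_eq] at h3
    refine h3.trans ?_
    omega
  · have h1 := card_cubeSet p hp hr0 hw
    have h1' := card_cubeSet p hp (pow_ne_zero 2 hr0) hw
    have h2 : {c | set2Prop p c} = cubeSet p r ∪ cubeSet p (r ^ 2) := by
      ext c
      constructor
      · intro hc
        obtain ⟨a, ha0, ha, hca⟩ := cubeSet_of_set2 p hw hc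
        obtain ⟨b, hb, rfl | rfl | rfl⟩ := hcl a ha0
        · exact absurd rfl (ha b)
        · exact Or.inl (cubeSet_mul_cube p hb hca)
        · exact Or.inr (cubeSet_mul_cube p hb hca)
      · rintro (hc | hc)
        · exact set2_of_cubeSet p hp hw hr0 hr hc
        · exact set2_of_cubeSet p hp hw (pow_ne_zero 2 hr0) hr2 hc
    have hdisj : Disjoint (cubeSet p r) (cubeSet p (r ^ 2)) := by
      rw [Set.disjoint_left]
      rintro c ⟨q, hq, h⟩ ⟨q', hq', h'⟩
      obtain ⟨s, t, ht, hst⟩ := lc_rel (bform_ne_zero hq') (h.symm.trans h')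
      apply hr (s / t)
      rw [div_pow, div_eq_iff (pow_ne_zero _ ht)]
      apply mul_left_cancel₀ hr0
      linear_combination hst
    have h3 := congrArg Set.ncard h2
    rw [Set.ncard_union_eq hdisj (Set.toFinite _) (Set.toFinite _), ← Nat.card_coe_set_eq] at h3
    refine h3.trans ?_
    omega
  · have h2 : {c | _} = ({0} : Set (Fin 7 → ZMod p)) := Set.ext (set3_iff p hp)
    have h3 := congrArg Set.ncard h2
    rw [← Nat.card_coe_set_eq, Set.ncard_singleton] at h3
    exact h3
end
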